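/- Let G and G′ be enclosures in V and let g₁,…,g_n and g′₁,…,g′_n (n ≥ 1) be elements of the affine Weyl group W_aff. Then the set {x ∈ G ∩ G′ : gᵢ(x) = g′ᵢ(x) for all i = 1,…,n} is again an enclosure (possibly empty), i.e. a bounded intersection of finitely many root half-spaces. (This is the key computation in the proof that any subsheaf of a finite product of representable sheaves on the site of enclosures is finitely related.) -/

import Mathlib

open scoped BigOperators

/-- The standard Cartan plane of type A₂: `{x ∈ ℝ³ : x₁ + x₂ + x₃ = 0}`. -/
abbrev Cartan : Type := {x : Fin 3 → ℝ // ∑ i, x i = 0}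

/-- The root half-space `{x : xᵢ − xⱼ ≥ c}`. -/
def RootHalfSpace (i j : Fin 3) (c : ℝ) : Set Cartan := {x | c ≤ x.1 i - x.1 j}

/-- The root hyperplane `{x : xᵢ − xⱼ = c}`. -/
def RootHyperplane (i j : Fin 3) (c : ℝ) : Set Cartan := {x | x.1 i - x.1 j = c}

/-- An enclosure: a bounded subset of the Cartan plane which is an intersection of
finitely many root half-spaces. -/
def IsEnclosure (E : Set Cartan) : Prop :=
  Bornology.IsBounded E ∧
  ∃ s : Finset (Fin 3 × Fin 3 × ℝ),
    (∀ p ∈ s, p.1 ≠ p.2.1) ∧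
    E = ⋂ p ∈ s, RootHalfSpace p.1 p.2.1 p.2.2

/-- An element of the affine Weyl group: `x ↦ σ·x + v` with `σ ∈ S₃` permuting
coordinates and `v` in the Cartan plane. -/
def IsAffWeyl (g : Cartan → Cartan) : Prop :=
  ∃ (σ : Equiv.Perm (Fin 3)) (v : Cartan),
    ∀ (x : Cartan) (i : Fin 3), (g x).1 i = x.1 (σ i) + v.1 i

theorem isAffWeyl_id : IsAffWeyl (fun x => x) := by
  refine ⟨Equiv.refl _, ⟨fun _ => 0, by simp⟩, ?_⟩
  intro x i
  simp

theorem IsAffWeyl.comp {g₂ g₁ : Cartan → Cartan} (h₂ : IsAffWeyl g₂) (h₁ : IsAffWeyl g₁) :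
    IsAffWeyl (fun x => g₂ (g₁ x)) := by
  obtain ⟨σ₂, v₂, hh₂⟩ := h₂
  obtain ⟨σ₁, v₁, hh₁⟩ := h₁
  refine ⟨σ₂.trans σ₁, ⟨fun i => v₁.1 (σ₂ i) + v₂.1 i, ?_⟩, ?_⟩
  · rw [Finset.sum_add_distrib, Equiv.sum_comp σ₂ v₁.1, v₁.2, v₂.2, add_zero]
  · intro x i
    rw [hh₂, hh₁]
    simp [Equiv.trans_apply]
    ring

/-!
Equality `g x = g' x` of two affine Weyl images is, coordinate by coordinate, a condition
`x_{σ k} - x_{σ' k} = c`, so an equalizer is an intersection of root hyperplanes, where the two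
indices may coincide. There are only finitely many directions `(i, j)`, and within one direction
two distinct hyperplanes are already disjoint. Hence even an arbitrary intersection of root
hyperplanes is an intersection of finitely many root half-spaces.
-/

/-- A polyhedron cut out by finitely many root half-spaces: the notion of enclosure without
boundedness. It is spelled so that `IsEnclosure E` unfolds to `IsBounded E ∧ IsRootPolyhedron E`. -/
def IsRootPolyhedron (E : Set Cartan) : Prop :=
  ∃ s : Finset (Fin 3 × Fin 3 × ℝ),
    (∀ p ∈ s, p.1 ≠ p.2.1) ∧ E = ⋂ p ∈ s, RootHalfSpace p.1 p.2.1 p.2.2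

theorem RootHalfSpace.isRootPolyhedron_of_ne {i j : Fin 3} (h : i ≠ j) (c : ℝ) :
    IsRootPolyhedron (RootHalfSpace i j c) :=
  ⟨{(i, j, c)}, by simpa using h, by simp⟩

namespace IsRootPolyhedron

theorem univ : IsRootPolyhedron Set.univ :=
  ⟨∅, by simp, by simp⟩

theorem iInter {ι : Sort*} [Finite ι] {E : ι → Set Cartan} (hE : ∀ i, IsRootPolyhedron (E i)) :
    IsRootPolyhedron (⋂ i, E i) := by
  choose s hs hE using hE
  have hfin : (⋃ i, (s i : Set (Fin 3 × Fin 3 × ℝ))).Finite :=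
    Set.finite_iUnion fun i => (s i).finite_toSet
  refine ⟨hfin.toFinset, fun p hp => ?_, ?_⟩
  · obtain ⟨i, hi⟩ := Set.mem_iUnion.1 (hfin.mem_toFinset.1 hp)
    exact hs i p hi
  · simp only [hE, Set.Finite.mem_toFinset, Set.biInter_iUnion, Finset.mem_coe]

theorem inter {E F : Set Cartan} (hE : IsRootPolyhedron E) (hF : IsRootPolyhedron F) :
    IsRootPolyhedron (E ∩ F) := by
  rw [Set.inter_eq_iInter]
  exact iInter (Bool.forall_bool.2 ⟨hF, hE⟩)

theorem empty : IsRootPolyhedron ∅ := by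
  have h_disjoint : RootHalfSpace 0 1 1 ∩ RootHalfSpace 1 0 0 = ∅ := by
    refine Set.eq_empty_of_forall_notMem fun x ⟨h₀₁, h₁₀⟩ => ?_
    simp only [RootHalfSpace, Set.mem_ofPred_eq] at h₀₁ h₁₀
    linarith
  rw [← h_disjoint]
  exact (RootHalfSpace.isRootPolyhedron_of_ne (by decide) 1).inter
    (RootHalfSpace.isRootPolyhedron_of_ne (by decide) 0)

end IsRootPolyhedron

theorem RootHalfSpace.isRootPolyhedron (i j : Fin 3) (c : ℝ) :
    IsRootPolyhedron (RootHalfSpace i j c) := by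
  rcases eq_or_ne i j with rfl | h
  · by_cases hc : c ≤ 0
    · have h_univ : RootHalfSpace i i c = Set.univ := by simp [RootHalfSpace, hc]
      exact h_univ ▸ .univ
    · have h_empty : RootHalfSpace i i c = ∅ := by simp [RootHalfSpace, hc]
      exact h_empty ▸ .empty
  · exact isRootPolyhedron_of_ne h c

namespace RootHyperplane

theorem eq_rootHalfSpace_inter (i j : Fin 3) (c : ℝ) :
    RootHyperplane i j c = RootHalfSpace i j c ∩ RootHalfSpace j i (-c) := by
  ext x
  simp only [RootHyperplane, RootHalfSpace, Set.mem_ofPred_eq, Set.mem_inter_iff]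
  rw [← neg_sub (x.1 i), neg_le_neg_iff, and_comm, le_antisymm_iff]

theorem isRootPolyhedron (i j : Fin 3) (c : ℝ) : IsRootPolyhedron (RootHyperplane i j c) := by
  rw [eq_rootHalfSpace_inter]
  exact (RootHalfSpace.isRootPolyhedron i j c).inter (RootHalfSpace.isRootPolyhedron j i (-c))

theorem isRootPolyhedron_biInter (i j : Fin 3) (C : Set ℝ) :
    IsRootPolyhedron (⋂ c ∈ C, RootHyperplane i j c) := by
  by_cases hC : C.Subsingleton
  · rcases hC.eq_empty_or_singleton with rfl | ⟨c, rfl⟩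
    · simpa only [Set.biInter_empty] using IsRootPolyhedron.univ
    · simpa only [Set.biInter_singleton] using isRootPolyhedron i j c
  · obtain ⟨c, hc, d, hd, hcd⟩ := Set.not_subsingleton_iff.1 hC
    have h_empty : ⋂ c ∈ C, RootHyperplane i j c = ∅ := by
      refine Set.eq_empty_of_forall_notMem fun x hx => hcd ?_
      rw [Set.mem_iInter₂] at hx
      exact (hx c hc).symm.trans (hx d hd)
    exact h_empty ▸ IsRootPolyhedron.empty

theorem isRootPolyhedron_iInter {ι : Sort*} (a b : ι → Fin 3) (c : ι → ℝ) :
    IsRootPolyhedron (⋂ k, RootHyperplane (a k) (b k) (c k)) := by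
  have h_group : ⋂ k, RootHyperplane (a k) (b k) (c k) =
      ⋂ (i) (j), ⋂ d ∈ {d | ∃ k, a k = i ∧ b k = j ∧ c k = d}, RootHyperplane i j d := by
    ext x
    simp only [Set.mem_iInter, Set.mem_ofPred_eq]
    constructor
    · rintro hx _ _ _ ⟨k, rfl, rfl, rfl⟩
      exact hx k
    · exact fun hx k => hx _ _ _ ⟨k, rfl, rfl, rfl⟩
  rw [h_group]
  exact .iInter fun i => .iInter fun j => isRootPolyhedron_biInter i j _

end RootHyperplane

theorem isRootPolyhedron_setOf_forall_eq {ι : Sort*} {g g' : ι → Cartan → Cartan}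
    (hg : ∀ i, IsAffWeyl (g i)) (hg' : ∀ i, IsAffWeyl (g' i)) :
    IsRootPolyhedron {x | ∀ i, g i x = g' i x} := by
  choose σ v hσ using hg
  choose σ' v' hσ' using hg'
  have h_coord : {x | ∀ i, g i x = g' i x} =
      ⋂ (k) (i), RootHyperplane (σ i k) (σ' i k) ((v' i).1 k - (v i).1 k) := by
    ext x
    simp only [Set.mem_ofPred_eq, Set.mem_iInter, RootHyperplane, Subtype.ext_iff, funext_iff,
      hσ, hσ', sub_eq_sub_iff_add_eq_add]
    rw [forall_comm]
    simp only [add_comm]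
  rw [h_coord]
  exact .iInter fun k => RootHyperplane.isRootPolyhedron_iInter _ _ _

theorem IsEnclosure.inter_isRootPolyhedron {E F : Set Cartan} (hE : IsEnclosure E)
    (hF : IsRootPolyhedron F) : IsEnclosure (E ∩ F) :=
  ⟨hE.1.subset Set.inter_subset_left, IsRootPolyhedron.inter hE.2 hF⟩

theorem isEnclosure_equalizer_general {ι : Sort*} {G G' : Set Cartan}
    (hG : IsEnclosure G) (hG' : IsRootPolyhedron G') {g g' : ι → Cartan → Cartan}
    (hg : ∀ i, IsAffWeyl (g i)) (hg' : ∀ i, IsAffWeyl (g' i)) :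
    IsEnclosure {x : Cartan | x ∈ G ∩ G' ∧ ∀ i, g i x = g' i x} :=
  (hG.inter_isRootPolyhedron hG').inter_isRootPolyhedron
    (isRootPolyhedron_setOf_forall_eq hg hg')

/-- For enclosures `G`, `G'` and affine Weyl elements `g₁,…,g_n` and
`g'₁,…,g'_n` (`n ≥ 1`), the set `{x ∈ G ∩ G' : gᵢ(x) = g'ᵢ(x) for all i}` is again an
enclosure (possibly empty), i.e. a bounded intersection of finitely many root half-spaces. -/
theorem isEnclosure_equalizer (G G' : Set Cartan)
    (hG : IsEnclosure G) (hG' : IsEnclosure G')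
    (n : ℕ) (hn : 1 ≤ n) (g g' : Fin n → (Cartan → Cartan))
    (hg : ∀ i, IsAffWeyl (g i)) (hg' : ∀ i, IsAffWeyl (g' i)) :
    IsEnclosure {x : Cartan | x ∈ G ∩ G' ∧ ∀ i, g i x = g' i x} :=
  isEnclosure_equalizer_general hG hG'.2 hg hg'
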